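/- Memoization-table lookups are bounded by in-degree for Memo-la (Lemma 9): For every run s of an execution of Memo-la, every state q ∈ P, and every position i ∈ {0, …, |w|}, the element M(q, i) appears at most #in(q) − 1 times in s. -/

import Mathlib

namespace RegexMemo

/-! ## Generic runs, `φ`, `sub`, `sub*` -/

variable {α : Type}

/-- `φ_s(ℓ, n)`: the index of the result value of the call at index `ℓ`. -/
def phiAux (isRet : α → Bool) (s : List α) (ℓ n : ℕ) : Option ℕ :=
  match h : s[ℓ]? with
  | none => none
  | some e =>
    if isRet e then
      if n ≤ 1 then some ℓ
      else phiAux isRet s (ℓ + 1) (n - 1)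
    else phiAux isRet s (ℓ + 1) (n + 1)
termination_by s.length - ℓ
decreasing_by
  all_goals
    have hl : ℓ < s.length := by
      by_contra hc
      have : s[ℓ]? = none := List.getElem?_eq_none (by omega)
      simp [this] at h
    omega

/-- `φ_s(ℓ) = φ_s(ℓ, 0)`. -/
def phi (isRet : α → Bool) (s : List α) (ℓ : ℕ) : Option ℕ := phiAux isRet s ℓ 0

/-- `sub(s, ℓ)`: replace the memoization-table invocation at index `ℓ` (an element
`M(q,i)` together with its immediately following result) by `C(q,i)` followed by the
subsequence `s[ℓ'+1] … s[φ_s(ℓ')]`, where `ℓ'` is the first index with `s[ℓ'] = C(q,i)`.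
Here `m2c` maps a memoization element `M(q,i)` to the corresponding call element `C(q,i)`
(and everything else to `none`), and `isRet` recognizes result elements. -/
def subExpand [DecidableEq α] (m2c : α → Option α) (isRet : α → Bool)
    (s : List α) (ℓ : ℕ) : Option (List α) :=
  match s[ℓ]? with
  | some e =>
    match m2c e with
    | some c =>
      match s.findIdx? (· == c) with
      | some ℓ' =>
        match phi isRet s ℓ' with
        | some m =>
          some (s.take ℓ ++ [c] ++ ((s.drop (ℓ' + 1)).take (m - ℓ')) ++ s.drop (ℓ + 2))
        | none => none
      | none => none
    | none => none
  | none => none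

/-- `sub*`: repeatedly locate the first memoization element and expand it,
until no memoization element remains. `SubStar m2c isRet s t` means `sub*(s) = t`. -/
inductive SubStar [DecidableEq α] (m2c : α → Option α) (isRet : α → Bool) :
    List α → List α → Prop where
  | done {s : List α} : s.findIdx? (fun e => (m2c e).isSome) = none →
      SubStar m2c isRet s s
  | step {s s' t : List α} {ℓ : ℕ} :
      s.findIdx? (fun e => (m2c e).isSome) = some ℓ →
      subExpand m2c isRet s ℓ = some s' →
      SubStar m2c isRet s' t →
      SubStar m2c isRet s t

/-- The number of (recursive) calls recorded in a run: the number of `C`/`M` elements. -/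
def callCount (isCall : α → Bool) (s : List α) : ℕ := (s.filter isCall).length

variable {Sigma S : Type}

/-- Results of backtracking matching: `SuccessAt i'` or `Failure`. -/
inductive Result : Type where
  | successAt : ℕ → Result
  | failure : Result
deriving DecidableEq

/-! ## Plain NFAs -/

/-- Transitions of a plain NFA. -/
inductive Trans (Sigma S : Type) : Type where
  | eps : S → Trans Sigma S
  | branch : S → S → Trans Sigma S
  | char : Sigma → S → Trans Sigma S

/-- A (plain) NFA over the alphabet `Sigma` with (finite) state type `S`:
an initial state, a set of accepting states, and a transition function
(whose value is only relevant on non-accepting states). -/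
structure NFA (Sigma S : Type) where
  q0 : S
  F : Set S
  T : S → Trans Sigma S

/-- One ε-step: an `Eps` or `Branch` transition of a non-accepting state. -/
def NFA.epsStep (A : NFA Sigma S) (q q' : S) : Prop :=
  q ∉ A.F ∧ (A.T q = Trans.eps q' ∨ (∃ q'', A.T q = Trans.branch q' q'') ∨
    (∃ q'', A.T q = Trans.branch q'' q'))

/-- The NFA has no ε-loops. -/
def NFA.NoEpsLoops (A : NFA Sigma S) : Prop :=
  ∀ q : S, ¬ Relation.TransGen A.epsStep q q

open Classical in
/-- The in-degree `#in(q)` of a state of a plain NFA. -/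
noncomputable def NFA.inDeg [Fintype S] (A : NFA Sigma S) (q : S) : ℕ :=
  (Finset.univ.filter fun q' : S => q' ∉ A.F ∧ A.T q' = Trans.eps q).card +
  (Finset.univ.filter fun q' : S => q' ∉ A.F ∧ ∃ σ, A.T q' = Trans.char σ q).card +
  (Finset.univ.filter fun q' : S => q' ∉ A.F ∧ ∃ q'', A.T q' = Trans.branch q q'').card +
  (Finset.univ.filter fun q' : S => q' ∉ A.F ∧ ∃ q'', A.T q' = Trans.branch q'' q).card +
  (if q = A.q0 then 1 else 0)

/-- The maximal in-degree `#in(A)` of a plain NFA. -/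
noncomputable def NFA.inDegMax [Fintype S] (A : NFA Sigma S) : ℕ :=
  Finset.univ.sup fun q : S => A.inDeg q

/-- Elements of runs of `Match`/`Memo`: calls `C(q,i)`, memoization-table invocations
`M(q,i)`, and results `S(i')` and `F`. -/
inductive RunElem (S : Type) : Type where
  | call : S → ℕ → RunElem S
  | memo : S → ℕ → RunElem S
  | succ : ℕ → RunElem S
  | fail : RunElem S
deriving DecidableEq

/-- The run element recording the return of a result. -/
def Result.elem {S : Type} : Result → RunElem S
  | .successAt i => .succ i
  | .failure => .fail

def RunElem.isRet : RunElem S → Bool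
  | .succ _ => true
  | .fail => true
  | _ => false

def RunElem.isCall : RunElem S → Bool
  | .call _ _ => true
  | .memo _ _ => true
  | _ => false

/-- `M(q,i) ↦ C(q,i)`. -/
def memoToCall : RunElem S → Option (RunElem S)
  | .memo q i => some (.call q i)
  | _ => none

/-- Big-step semantics (together with the produced run) of the backtracking
matching algorithm `Match` for plain NFAs:
`MatchRun A w q i r s` means the call `Match_{A,w}(q, i)` terminates with
result `r` and produces the run `s`. -/
inductive MatchRun (A : NFA Sigma S) (w : List Sigma) :
    S → ℕ → Result → List (RunElem S) → Prop where
  | accept {q : S} {i : ℕ} : q ∈ A.F →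
      MatchRun A w q i (.successAt i) [.call q i, .succ i]
  | eps {q q' : S} {i : ℕ} {r : Result} {s : List (RunElem S)} :
      q ∉ A.F → A.T q = Trans.eps q' →
      MatchRun A w q' i r s →
      MatchRun A w q i r (.call q i :: s ++ [r.elem])
  | branchSucc {q q' q'' : S} {i i' : ℕ} {s : List (RunElem S)} :
      q ∉ A.F → A.T q = Trans.branch q' q'' →
      MatchRun A w q' i (.successAt i') s →
      MatchRun A w q i (.successAt i') (.call q i :: s ++ [RunElem.succ i'])
  | branchFail {q q' q'' : S} {i : ℕ} {r : Result} {s s' : List (RunElem S)} :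
      q ∉ A.F → A.T q = Trans.branch q' q'' →
      MatchRun A w q' i .failure s →
      MatchRun A w q'' i r s' →
      MatchRun A w q i r (.call q i :: s ++ s' ++ [r.elem])
  | charSucc {q q' : S} {σ : Sigma} {i : ℕ} {r : Result} {s : List (RunElem S)} :
      q ∉ A.F → A.T q = Trans.char σ q' →
      w[i]? = some σ →
      MatchRun A w q' (i + 1) r s →
      MatchRun A w q i r (.call q i :: s ++ [r.elem])
  | charFail {q q' : S} {σ : Sigma} {i : ℕ} :
      q ∉ A.F → A.T q = Trans.char σ q' →
      w[i]? ≠ some σ →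
      MatchRun A w q i .failure [.call q i, .fail]

/-- Record `M(q,i) := Failure` in the memoization table if the result is a failure. -/
def recFail [DecidableEq S] (M : S × ℕ → Bool) (q : S) (i : ℕ) : Result → (S × ℕ → Bool)
  | .failure => fun p => if p = (q, i) then true else M p
  | _ => M

/-- Big-step semantics (with resulting memoization table and produced run) of the
memoized backtracking matching algorithm `Memo` for plain NFAs:
`MemoRun A w q i M M' r s` means the call `Memo^M_{A,w}(q, i)` terminates with result
`r`, final memoization table `M'` (where `M p = true` means `Failure` is recorded at the
key `p`), and produces the run `s`. -/
inductive MemoRun [DecidableEq S] (A : NFA Sigma S) (w : List Sigma) :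
    S → ℕ → (S × ℕ → Bool) → (S × ℕ → Bool) → Result → List (RunElem S) → Prop where
  | memoHit {q : S} {i : ℕ} {M : S × ℕ → Bool} : M (q, i) = true →
      MemoRun A w q i M M .failure [.memo q i, .fail]
  | accept {q : S} {i : ℕ} {M : S × ℕ → Bool} : M (q, i) = false → q ∈ A.F →
      MemoRun A w q i M M (.successAt i) [.call q i, .succ i]
  | eps {q q' : S} {i : ℕ} {M M' : S × ℕ → Bool} {r : Result} {s : List (RunElem S)} :
      M (q, i) = false → q ∉ A.F → A.T q = Trans.eps q' →
      MemoRun A w q' i M M' r s →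
      MemoRun A w q i M (recFail M' q i r) r (.call q i :: s ++ [r.elem])
  | branchSucc {q q' q'' : S} {i i' : ℕ} {M M' : S × ℕ → Bool} {s : List (RunElem S)} :
      M (q, i) = false → q ∉ A.F → A.T q = Trans.branch q' q'' →
      MemoRun A w q' i M M' (.successAt i') s →
      MemoRun A w q i M M' (.successAt i') (.call q i :: s ++ [RunElem.succ i'])
  | branchFail {q q' q'' : S} {i : ℕ} {M M' M'' : S × ℕ → Bool} {r : Result}
      {s s' : List (RunElem S)} :
      M (q, i) = false → q ∉ A.F → A.T q = Trans.branch q' q'' →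
      MemoRun A w q' i M M' .failure s →
      MemoRun A w q'' i M' M'' r s' →
      MemoRun A w q i M (recFail M'' q i r) r (.call q i :: s ++ s' ++ [r.elem])
  | charSucc {q q' : S} {σ : Sigma} {i : ℕ} {M M' : S × ℕ → Bool} {r : Result}
      {s : List (RunElem S)} :
      M (q, i) = false → q ∉ A.F → A.T q = Trans.char σ q' →
      w[i]? = some σ →
      MemoRun A w q' (i + 1) M M' r s →
      MemoRun A w q i M (recFail M' q i r) r (.call q i :: s ++ [r.elem])
  | charFail {q q' : S} {σ : Sigma} {i : ℕ} {M : S × ℕ → Bool} :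
      M (q, i) = false → q ∉ A.F → A.T q = Trans.char σ q' →
      w[i]? ≠ some σ →
      MemoRun A w q i M (recFail M q i .failure) .failure [.call q i, .fail]

/-! ## NFAs with sub-automata -/

/-- Kind labels of sub-automaton transitions: positive/negative look-ahead/look-behind
and atomic grouping. -/
inductive Kind : Type where
  | pla | nla | plb | nlb | at
deriving DecidableEq

mutual
/-- An NFA with sub-automata `⟨Q, q0, F, T⟩`: a list of top-level states, an initial
state, accepting states, and a transition function (relevant on non-accepting top-level
states) whose transitions may be labelled with further NFAs with sub-automata. -/
inductive SubNFA (Sigma S : Type) : Type where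
  | mk : List S → S → List S → (S → SubTrans Sigma S) → SubNFA Sigma S

/-- Transitions of an NFA with sub-automata. -/
inductive SubTrans (Sigma S : Type) : Type where
  | eps : S → SubTrans Sigma S
  | branch : S → S → SubTrans Sigma S
  | char : Sigma → S → SubTrans Sigma S
  | sub : Kind → SubNFA Sigma S → S → SubTrans Sigma S
end

/-- Top-level states `Q`. -/
def SubNFA.Q : SubNFA Sigma S → List S
  | .mk Q _ _ _ => Q

/-- Initial state `q0`. -/
def SubNFA.q0 : SubNFA Sigma S → S
  | .mk _ q0 _ _ => q0

/-- Accepting states `F`. -/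
def SubNFA.F : SubNFA Sigma S → List S
  | .mk _ _ F _ => F

/-- Transition function `T`. -/
def SubNFA.T : SubNFA Sigma S → S → SubTrans Sigma S
  | .mk _ _ _ T => T

mutual
/-- All automata occurring within an NFA with sub-automata (including itself), each
together with its nesting depth of atomic grouping (the number of enclosing
`at`-sub-automaton boundaries). -/
def SubNFA.compsD : SubNFA Sigma S → List (SubNFA Sigma S × ℕ)
  | .mk Q q0 F T => (.mk Q q0 F T, 0) :: Q.flatMap (fun q => SubTrans.subCompsD (T q))

def SubTrans.subCompsD : SubTrans Sigma S → List (SubNFA Sigma S × ℕ)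
  | .sub k A' _ => (SubNFA.compsD A').map (fun p => (p.1, p.2 + (if k = Kind.at then 1 else 0)))
  | _ => []
end

/-- All automata occurring within `A` (including `A` itself). -/
def SubNFA.comps (A : SubNFA Sigma S) : List (SubNFA Sigma S) :=
  A.compsD.map Prod.fst

/-- The set (list) of all states `P` occurring within `A`. -/
def SubNFA.allStates (A : SubNFA Sigma S) : List S :=
  A.comps.flatMap SubNFA.Q

/-- The nesting depth of atomic grouping `ν_A(q)` of a state `q` of `A`. -/
def SubNFA.nu [DecidableEq S] (A : SubNFA Sigma S) (q : S) : ℕ :=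
  (A.compsD.map (fun p => if q ∈ p.1.Q then p.2 else 0)).sum

/-- The maximal nesting depth of atomic grouping `ν(A)`. -/
def SubNFA.nuMax [DecidableEq S] (A : SubNFA Sigma S) : ℕ :=
  (A.allStates.map A.nu).foldr max 0

/-- Local wellformedness of one automaton: the initial state is a top-level state,
accepting states are top-level states, and transitions of non-accepting top-level
states lead to top-level states. -/
def SubNFA.LocalOK (B : SubNFA Sigma S) : Prop :=
  B.q0 ∈ B.Q ∧ (∀ f ∈ B.F, f ∈ B.Q) ∧ ∀ q ∈ B.Q, q ∉ B.F →
    match B.T q with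
    | .eps q' => q' ∈ B.Q
    | .branch q' q'' => q' ∈ B.Q ∧ q'' ∈ B.Q
    | .char _ q' => q' ∈ B.Q
    | .sub _ _ q' => q' ∈ B.Q

/-- Wellformedness of an NFA with sub-automata: every component automaton is locally
wellformed, and all the state lists are disjoint and duplicate-free (so that `P` is
the disjoint union of the top-level state sets of all components). -/
def SubNFA.WF (A : SubNFA Sigma S) : Prop :=
  (∀ B ∈ A.comps, B.LocalOK) ∧ A.allStates.Nodup

/-- The kind labels of all sub-automaton transitions occurring in `A`. -/
def SubNFA.kinds [DecidableEq S] (A : SubNFA Sigma S) : List Kind :=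
  A.comps.flatMap fun B =>
    (B.Q.filter (fun q => decide (q ∉ B.F))).filterMap fun q =>
      match B.T q with
      | .sub k _ _ => some k
      | _ => none

/-- A la-NFA: all kind labels are look-around labels (for simplicity, only positive
look-ahead `pla` is treated). -/
def SubNFA.IsLaNFA [DecidableEq S] (A : SubNFA Sigma S) : Prop :=
  ∀ k ∈ A.kinds, k = Kind.pla

/-- An at-NFA: all kind labels are `at` (atomic grouping). -/
def SubNFA.IsAtNFA [DecidableEq S] (A : SubNFA Sigma S) : Prop :=
  ∀ k ∈ A.kinds, k = Kind.at

/-- A (la,at)-NFA in which (for simplicity) only the kinds `pla` and `at` occur. -/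
def SubNFA.IsLaAtNFA [DecidableEq S] (A : SubNFA Sigma S) : Prop :=
  ∀ k ∈ A.kinds, k = Kind.pla ∨ k = Kind.at

/-- One global ε-step of an NFA with sub-automata: an `Eps` or `Branch` transition, or a
`Sub` transition with a look-around kind (from the transition's source to its successor),
of a non-accepting top-level state of any component automaton. -/
def SubNFA.epsStep (A : SubNFA Sigma S) (q q' : S) : Prop :=
  ∃ B ∈ A.comps, q ∈ B.Q ∧ q ∉ B.F ∧
    (B.T q = SubTrans.eps q' ∨
     (∃ q'', B.T q = SubTrans.branch q' q'') ∨
     (∃ q'', B.T q = SubTrans.branch q'' q') ∨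
     (∃ k A'', B.T q = SubTrans.sub k A'' q' ∧ k ≠ Kind.at))

/-- The NFA with sub-automata has no ε-loops. -/
def SubNFA.NoEpsLoops (A : SubNFA Sigma S) : Prop :=
  ∀ q : S, ¬ Relation.TransGen A.epsStep q q

/-- All pairs (state, transition) of non-accepting top-level states of all component
automata of `A`. -/
def SubNFA.allTransNF [DecidableEq S] (A : SubNFA Sigma S) : List (S × SubTrans Sigma S) :=
  A.comps.flatMap fun B => (B.Q.filter (fun q => decide (q ∉ B.F))).map fun q => (q, B.T q)

/-- How many of the buckets in the definition of the in-degree of `q` a given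
transition contributes to. -/
def SubTrans.hits [DecidableEq S] (t : SubTrans Sigma S) (q : S) : ℕ :=
  match t with
  | .eps q' => if q' = q then 1 else 0
  | .char _ q' => if q' = q then 1 else 0
  | .branch q' q'' => (if q' = q then 1 else 0) + (if q'' = q then 1 else 0)
  | .sub _ _ q' => if q' = q then 1 else 0

/-- The in-degree `#in(q)` of a state of an NFA with sub-automata. -/
def SubNFA.inDeg [DecidableEq S] (A : SubNFA Sigma S) (q : S) : ℕ :=
  (A.allTransNF.map (fun p => p.2.hits q)).sum +
  (if q ∈ A.comps.map SubNFA.q0 then 1 else 0)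

/-- The maximal in-degree `#in(A)`. -/
def SubNFA.inDegMax [DecidableEq S] (A : SubNFA Sigma S) : ℕ :=
  (A.allStates.map A.inDeg).foldr max 0

/-! ## run elements for `Memo-la` and `Match-(la,at)` -/

/-- Elements of runs of `Memo-la` (and of `Match-(la,at)`): calls `C(q,i)`,
memoization-table invocations `M(q,i)`, and the results `S(i')`, `S'` (bare success),
and `F`. -/
inductive LaRunElem (S : Type) : Type where
  | call : S → ℕ → LaRunElem S
  | memo : S → ℕ → LaRunElem S
  | succAt : ℕ → LaRunElem S
  | succ : LaRunElem S
  | fail : LaRunElem S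
deriving DecidableEq

def LaRunElem.isRet : LaRunElem S → Bool
  | .succAt _ => true
  | .succ => true
  | .fail => true
  | _ => false

def LaRunElem.isCall : LaRunElem S → Bool
  | .call _ _ => true
  | .memo _ _ => true
  | _ => false

def laMemoToCall : LaRunElem S → Option (LaRunElem S)
  | .memo q i => some (.call q i)
  | _ => none

def Result.laElem {S : Type} : Result → LaRunElem S
  | .successAt i => .succAt i
  | .failure => .fail

/-! ## The backtracking matching algorithm `Match-(la,at)` -/

/-- Big-step semantics (with produced run) of the backtracking matching algorithm
`Match-(la,at)` for NFAs with sub-automata: `LAMatchRun w A q i r s` means the call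
`Match-(la,at)_{A,w}(q, i)` terminates with result `r` and produces the run `s`.
For simplicity, only the look-around kind `pla` (besides `at`) is treated. -/
inductive LAMatchRun (w : List Sigma) :
    SubNFA Sigma S → S → ℕ → Result → List (LaRunElem S) → Prop where
  | accept {A : SubNFA Sigma S} {q : S} {i : ℕ} : q ∈ A.F →
      LAMatchRun w A q i (.successAt i) [.call q i, .succAt i]
  | eps {A : SubNFA Sigma S} {q q' : S} {i : ℕ} {r : Result} {s : List (LaRunElem S)} :
      q ∉ A.F → A.T q = SubTrans.eps q' →
      LAMatchRun w A q' i r s →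
      LAMatchRun w A q i r (.call q i :: s ++ [r.laElem])
  | branchSucc {A : SubNFA Sigma S} {q q' q'' : S} {i i' : ℕ} {s : List (LaRunElem S)} :
      q ∉ A.F → A.T q = SubTrans.branch q' q'' →
      LAMatchRun w A q' i (.successAt i') s →
      LAMatchRun w A q i (.successAt i') (.call q i :: s ++ [LaRunElem.succAt i'])
  | branchFail {A : SubNFA Sigma S} {q q' q'' : S} {i : ℕ} {r : Result}
      {s s' : List (LaRunElem S)} :
      q ∉ A.F → A.T q = SubTrans.branch q' q'' →
      LAMatchRun w A q' i .failure s →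
      LAMatchRun w A q'' i r s' →
      LAMatchRun w A q i r (.call q i :: s ++ s' ++ [r.laElem])
  | charSucc {A : SubNFA Sigma S} {q q' : S} {σ : Sigma} {i : ℕ} {r : Result}
      {s : List (LaRunElem S)} :
      q ∉ A.F → A.T q = SubTrans.char σ q' →
      w[i]? = some σ →
      LAMatchRun w A q' (i + 1) r s →
      LAMatchRun w A q i r (.call q i :: s ++ [r.laElem])
  | charFail {A : SubNFA Sigma S} {q q' : S} {σ : Sigma} {i : ℕ} :
      q ∉ A.F → A.T q = SubTrans.char σ q' →
      w[i]? ≠ some σ →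
      LAMatchRun w A q i .failure [.call q i, .fail]
  | plaSucc {A A' : SubNFA Sigma S} {q q' : S} {i i' : ℕ} {r : Result}
      {s1 s2 : List (LaRunElem S)} :
      q ∉ A.F → A.T q = SubTrans.sub Kind.pla A' q' →
      LAMatchRun w A' A'.q0 i (.successAt i') s1 →
      LAMatchRun w A q' i r s2 →
      LAMatchRun w A q i r (.call q i :: s1 ++ s2 ++ [r.laElem])
  | plaFail {A A' : SubNFA Sigma S} {q q' : S} {i : ℕ} {s1 : List (LaRunElem S)} :
      q ∉ A.F → A.T q = SubTrans.sub Kind.pla A' q' →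
      LAMatchRun w A' A'.q0 i .failure s1 →
      LAMatchRun w A q i .failure (.call q i :: s1 ++ [LaRunElem.fail])
  | atSucc {A A' : SubNFA Sigma S} {q q' : S} {i i' : ℕ} {r : Result}
      {s1 s2 : List (LaRunElem S)} :
      q ∉ A.F → A.T q = SubTrans.sub Kind.at A' q' →
      LAMatchRun w A' A'.q0 i (.successAt i') s1 →
      LAMatchRun w A q' i' r s2 →
      LAMatchRun w A q i r (.call q i :: s1 ++ s2 ++ [r.laElem])
  | atFail {A A' : SubNFA Sigma S} {q q' : S} {i : ℕ} {s1 : List (LaRunElem S)} :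
      q ∉ A.F → A.T q = SubTrans.sub Kind.at A' q' →
      LAMatchRun w A' A'.q0 i .failure s1 →
      LAMatchRun w A q i .failure (.call q i :: s1 ++ [LaRunElem.fail])

/-! ## `Memo-la` -/

/-- Values of the memoization table of `Memo-la`: `Failure` or `Success`. -/
inductive LaVal : Type where
  | success : LaVal
  | failure : LaVal
deriving DecidableEq

/-- Results of `Memo-la`: `SuccessAt i'`, bare `Success`, or `Failure`. -/
inductive LaResult : Type where
  | successAt : ℕ → LaResult
  | success : LaResult
  | failure : LaResult
deriving DecidableEq

def LaVal.toResult : LaVal → LaResult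
  | .success => .success
  | .failure => .failure

def LaResult.elem {S : Type} : LaResult → LaRunElem S
  | .successAt i => .succAt i
  | .success => .succ
  | .failure => .fail

def Result.toLa : Result → LaResult
  | .successAt i => .successAt i
  | .failure => .failure

/-- The final recording of `Memo-la`: `M(q,i) := Success` if the result is
`SuccessAt i'` or `Success`, and `M(q,i) := Failure` if the result is `Failure`. -/
def laRecord [DecidableEq S] (M : S × ℕ → Option LaVal) (q : S) (i : ℕ) (r : LaResult) :
    S × ℕ → Option LaVal :=
  fun p => if p = (q, i) then
    some (match r with | .failure => LaVal.failure | _ => LaVal.success)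
  else M p

/-- Big-step semantics (with resulting memoization table and produced run) of the
memoized backtracking matching algorithm `Memo-la` for la-NFAs:
`MemoLaRun w A q i M M' r s` means the call `Memo-la^M_{A,w}(q, i)` terminates with
result `r`, final memoization table `M'`, and produces the run `s`. The memoization
table is shared between the top-level automaton and all sub-automata. -/
inductive MemoLaRun [DecidableEq S] (w : List Sigma) :
    SubNFA Sigma S → S → ℕ → (S × ℕ → Option LaVal) → (S × ℕ → Option LaVal) →
    LaResult → List (LaRunElem S) → Prop where
  | memoHit {A : SubNFA Sigma S} {q : S} {i : ℕ} {M : S × ℕ → Option LaVal} {v : LaVal} :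
      M (q, i) = some v →
      MemoLaRun w A q i M M v.toResult [.memo q i, v.toResult.elem]
  | accept {A : SubNFA Sigma S} {q : S} {i : ℕ} {M : S × ℕ → Option LaVal} :
      M (q, i) = none → q ∈ A.F →
      MemoLaRun w A q i M (laRecord M q i (.successAt i)) (.successAt i)
        [.call q i, .succAt i]
  | eps {A : SubNFA Sigma S} {q q' : S} {i : ℕ} {M M' : S × ℕ → Option LaVal}
      {r : LaResult} {s : List (LaRunElem S)} :
      M (q, i) = none → q ∉ A.F → A.T q = SubTrans.eps q' →
      MemoLaRun w A q' i M M' r s →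
      MemoLaRun w A q i M (laRecord M' q i r) r (.call q i :: s ++ [r.elem])
  | branchNoFail {A : SubNFA Sigma S} {q q' q'' : S} {i : ℕ}
      {M M' : S × ℕ → Option LaVal} {r : LaResult} {s : List (LaRunElem S)} :
      M (q, i) = none → q ∉ A.F → A.T q = SubTrans.branch q' q'' →
      MemoLaRun w A q' i M M' r s → r ≠ .failure →
      MemoLaRun w A q i M (laRecord M' q i r) r (.call q i :: s ++ [r.elem])
  | branchFail {A : SubNFA Sigma S} {q q' q'' : S} {i : ℕ}
      {M M1 M2 : S × ℕ → Option LaVal} {r : LaResult} {s1 s2 : List (LaRunElem S)} :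
      M (q, i) = none → q ∉ A.F → A.T q = SubTrans.branch q' q'' →
      MemoLaRun w A q' i M M1 .failure s1 →
      MemoLaRun w A q'' i M1 M2 r s2 →
      MemoLaRun w A q i M (laRecord M2 q i r) r (.call q i :: s1 ++ s2 ++ [r.elem])
  | charSucc {A : SubNFA Sigma S} {q q' : S} {σ : Sigma} {i : ℕ}
      {M M' : S × ℕ → Option LaVal} {r : LaResult} {s : List (LaRunElem S)} :
      M (q, i) = none → q ∉ A.F → A.T q = SubTrans.char σ q' →
      w[i]? = some σ →
      MemoLaRun w A q' (i + 1) M M' r s →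
      MemoLaRun w A q i M (laRecord M' q i r) r (.call q i :: s ++ [r.elem])
  | charFail {A : SubNFA Sigma S} {q q' : S} {σ : Sigma} {i : ℕ}
      {M : S × ℕ → Option LaVal} :
      M (q, i) = none → q ∉ A.F → A.T q = SubTrans.char σ q' →
      w[i]? ≠ some σ →
      MemoLaRun w A q i M (laRecord M q i .failure) .failure [.call q i, .fail]
  | plaSucc {A A' : SubNFA Sigma S} {q q' : S} {i : ℕ}
      {M M1 M2 : S × ℕ → Option LaVal} {r1 r : LaResult} {s1 s2 : List (LaRunElem S)} :
      M (q, i) = none → q ∉ A.F → A.T q = SubTrans.sub Kind.pla A' q' →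
      MemoLaRun w A' A'.q0 i M M1 r1 s1 → r1 ≠ .failure →
      MemoLaRun w A q' i M1 M2 r s2 →
      MemoLaRun w A q i M (laRecord M2 q i r) r (.call q i :: s1 ++ s2 ++ [r.elem])
  | plaFail {A A' : SubNFA Sigma S} {q q' : S} {i : ℕ}
      {M M1 : S × ℕ → Option LaVal} {s1 : List (LaRunElem S)} :
      M (q, i) = none → q ∉ A.F → A.T q = SubTrans.sub Kind.pla A' q' →
      MemoLaRun w A' A'.q0 i M M1 .failure s1 →
      MemoLaRun w A q i M (laRecord M1 q i .failure) .failure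
        (.call q i :: s1 ++ [LaRunElem.fail])

/-! ## `Memo-at` -/

/-- Results of `Memo-at`: `SuccessAt(i', K)` with a set `K` of delayed memoization keys,
or `Failure(j)` with a nesting depth `j`. -/
inductive AtResult (S : Type) : Type where
  | successAt : ℕ → Finset (S × ℕ) → AtResult S
  | failure : ℕ → AtResult S

/-- Elements of runs of `Memo-at`: calls `C(q,i)`, memoization-table invocations
`M(q,i)`, and results `S(i')` and `F(j)`. -/
inductive AtRunElem (S : Type) : Type where
  | call : S → ℕ → AtRunElem S
  | memo : S → ℕ → AtRunElem S
  | succ : ℕ → AtRunElem S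
  | fail : ℕ → AtRunElem S
deriving DecidableEq

def AtRunElem.isRet : AtRunElem S → Bool
  | .succ _ => true
  | .fail _ => true
  | _ => false

def AtRunElem.isCall : AtRunElem S → Bool
  | .call _ _ => true
  | .memo _ _ => true
  | _ => false

def atMemoToCall : AtRunElem S → Option (AtRunElem S)
  | .memo q i => some (.call q i)
  | _ => none

def AtResult.elem {S : Type} : AtResult S → AtRunElem S
  | .successAt i _ => .succ i
  | .failure j => .fail j

/-- `f`, converting results of `Memo-at` to results of `Match-(la,at)`. -/
def AtResult.toResult {S : Type} : AtResult S → Result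
  | .successAt i _ => .successAt i
  | .failure _ => .failure

/-- The final step of `Memo-at`: on success, the key `(q,i)` is added to the set of
delayed keys. -/
def atFinal [DecidableEq S] (q : S) (i : ℕ) : AtResult S → AtResult S
  | .successAt i' K => .successAt i' (insert (q, i) K)
  | .failure j => .failure j

/-- The final recording of `Memo-at`: `M(q,i) := Failure(j)` if the result is
`Failure(j)`. -/
def atRecord [DecidableEq S] (M : S × ℕ → Option ℕ) (q : S) (i : ℕ) :
    AtResult S → (S × ℕ → Option ℕ)
  | .failure j => fun p => if p = (q, i) then some j else M p
  | _ => M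

/-- Batch recording `M(k) := Failure(j)` for every `k ∈ K`. -/
def atBatch [DecidableEq S] (M : S × ℕ → Option ℕ) (K : Finset (S × ℕ)) (j : ℕ) :
    S × ℕ → Option ℕ :=
  fun p => if p ∈ K then some j else M p

/-- Big-step semantics (with resulting memoization table and produced run) of the
memoized backtracking matching algorithm `Memo-at` for at-NFAs:
`MemoAtRun A0 w A q i M M' r s` means the call `Memo-at^M_{A0,A,w}(q, i)` (with the
whole automaton `A0` and current sub-automaton `A`) terminates with result `r`, final
memoization table `M'`, and produces the run `s`. -/
inductive MemoAtRun [DecidableEq S] (A0 : SubNFA Sigma S) (w : List Sigma) :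
    SubNFA Sigma S → S → ℕ → (S × ℕ → Option ℕ) → (S × ℕ → Option ℕ) →
    AtResult S → List (AtRunElem S) → Prop where
  | memoHit {A : SubNFA Sigma S} {q : S} {i j : ℕ} {M : S × ℕ → Option ℕ} :
      M (q, i) = some j →
      MemoAtRun A0 w A q i M M (.failure j) [.memo q i, .fail j]
  | accept {A : SubNFA Sigma S} {q : S} {i : ℕ} {M : S × ℕ → Option ℕ} :
      M (q, i) = none → q ∈ A.F →
      MemoAtRun A0 w A q i M M (.successAt i {(q, i)}) [.call q i, .succ i]
  | eps {A : SubNFA Sigma S} {q q' : S} {i : ℕ} {M M' : S × ℕ → Option ℕ}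
      {r : AtResult S} {s : List (AtRunElem S)} :
      M (q, i) = none → q ∉ A.F → A.T q = SubTrans.eps q' →
      MemoAtRun A0 w A q' i M M' r s →
      MemoAtRun A0 w A q i M (atRecord M' q i r) (atFinal q i r)
        (.call q i :: s ++ [r.elem])
  | branchNoBT {A : SubNFA Sigma S} {q q' q'' : S} {i : ℕ} {M M' : S × ℕ → Option ℕ}
      {r : AtResult S} {s : List (AtRunElem S)} :
      M (q, i) = none → q ∉ A.F → A.T q = SubTrans.branch q' q'' →
      MemoAtRun A0 w A q' i M M' r s →
      (∀ j, r = AtResult.failure j → j ≠ A0.nu q) →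
      MemoAtRun A0 w A q i M (atRecord M' q i r) (atFinal q i r)
        (.call q i :: s ++ [r.elem])
  | branchBTSucc {A : SubNFA Sigma S} {q q' q'' : S} {i i'' : ℕ} {K : Finset (S × ℕ)}
      {M M1 M2 : S × ℕ → Option ℕ} {s1 s2 : List (AtRunElem S)} :
      M (q, i) = none → q ∉ A.F → A.T q = SubTrans.branch q' q'' →
      MemoAtRun A0 w A q' i M M1 (.failure (A0.nu q)) s1 →
      MemoAtRun A0 w A q'' i M1 M2 (.successAt i'' K) s2 →
      MemoAtRun A0 w A q i M M2 (atFinal q i (.successAt i'' K))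
        (.call q i :: s1 ++ s2 ++ [AtRunElem.succ i''])
  | branchBTFail {A : SubNFA Sigma S} {q q' q'' : S} {i j' : ℕ}
      {M M1 M2 : S × ℕ → Option ℕ} {s1 s2 : List (AtRunElem S)} :
      M (q, i) = none → q ∉ A.F → A.T q = SubTrans.branch q' q'' →
      MemoAtRun A0 w A q' i M M1 (.failure (A0.nu q)) s1 →
      MemoAtRun A0 w A q'' i M1 M2 (.failure j') s2 →
      MemoAtRun A0 w A q i M (atRecord M2 q i (.failure (min (A0.nu q) j')))
        (.failure (min (A0.nu q) j'))
        (.call q i :: s1 ++ s2 ++ [AtRunElem.fail (min (A0.nu q) j')])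
  | charSucc {A : SubNFA Sigma S} {q q' : S} {σ : Sigma} {i : ℕ}
      {M M' : S × ℕ → Option ℕ} {r : AtResult S} {s : List (AtRunElem S)} :
      M (q, i) = none → q ∉ A.F → A.T q = SubTrans.char σ q' →
      w[i]? = some σ →
      MemoAtRun A0 w A q' (i + 1) M M' r s →
      MemoAtRun A0 w A q i M (atRecord M' q i r) (atFinal q i r)
        (.call q i :: s ++ [r.elem])
  | charFail {A : SubNFA Sigma S} {q q' : S} {σ : Sigma} {i : ℕ}
      {M : S × ℕ → Option ℕ} :
      M (q, i) = none → q ∉ A.F → A.T q = SubTrans.char σ q' →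
      w[i]? ≠ some σ →
      MemoAtRun A0 w A q i M (atRecord M q i (.failure (A0.nu q)))
        (.failure (A0.nu q)) [.call q i, .fail (A0.nu q)]
  | subSuccSucc {A A' : SubNFA Sigma S} {q q' : S} {i i' i'' : ℕ}
      {K' K'' : Finset (S × ℕ)} {M M1 M2 : S × ℕ → Option ℕ}
      {s1 s2 : List (AtRunElem S)} :
      M (q, i) = none → q ∉ A.F → A.T q = SubTrans.sub Kind.at A' q' →
      MemoAtRun A0 w A' A'.q0 i M M1 (.successAt i' K') s1 →
      MemoAtRun A0 w A q' i' M1 M2 (.successAt i'' K'') s2 →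
      MemoAtRun A0 w A q i M M2 (atFinal q i (.successAt i'' (K' ∪ K'')))
        (.call q i :: s1 ++ s2 ++ [AtRunElem.succ i''])
  | subSuccFail {A A' : SubNFA Sigma S} {q q' : S} {i i' j : ℕ} {K' : Finset (S × ℕ)}
      {M M1 M2 : S × ℕ → Option ℕ} {s1 s2 : List (AtRunElem S)} :
      M (q, i) = none → q ∉ A.F → A.T q = SubTrans.sub Kind.at A' q' →
      MemoAtRun A0 w A' A'.q0 i M M1 (.successAt i' K') s1 →
      MemoAtRun A0 w A q' i' M1 M2 (.failure j) s2 →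
      MemoAtRun A0 w A q i M (atRecord (atBatch M2 K' j) q i (.failure j)) (.failure j)
        (.call q i :: s1 ++ s2 ++ [AtRunElem.fail j])
  | subFailHigh {A A' : SubNFA Sigma S} {q q' : S} {i j : ℕ}
      {M M1 : S × ℕ → Option ℕ} {s1 : List (AtRunElem S)} :
      M (q, i) = none → q ∉ A.F → A.T q = SubTrans.sub Kind.at A' q' →
      MemoAtRun A0 w A' A'.q0 i M M1 (.failure j) s1 →
      A0.nu q < j →
      MemoAtRun A0 w A q i M (atRecord M1 q i (.failure (A0.nu q)))
        (.failure (A0.nu q)) (.call q i :: s1 ++ [AtRunElem.fail (A0.nu q)])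
  | subFailLow {A A' : SubNFA Sigma S} {q q' : S} {i j : ℕ}
      {M M1 : S × ℕ → Option ℕ} {s1 : List (AtRunElem S)} :
      M (q, i) = none → q ∉ A.F → A.T q = SubTrans.sub Kind.at A' q' →
      MemoAtRun A0 w A' A'.q0 i M M1 (.failure j) s1 →
      j ≤ A0.nu q →
      MemoAtRun A0 w A q i M (atRecord M1 q i (.failure j)) (.failure j)
        (.call q i :: s1 ++ [AtRunElem.fail j])

/-! ## The combined algorithm `Memo-(la,at)` -/

/-- Values of the memoization table of `Memo-(la,at)`: `Success` or `Failure(j)`. -/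
inductive LaAtVal : Type where
  | success : LaAtVal
  | failure : ℕ → LaAtVal

/-- Results of `Memo-(la,at)`: `SuccessAt(i', K)`, bare `Success`, or `Failure(j)`. -/
inductive LaAtResult (S : Type) : Type where
  | successAt : ℕ → Finset (S × ℕ) → LaAtResult S
  | success : LaAtResult S
  | failure : ℕ → LaAtResult S

def LaAtVal.toResult {S : Type} : LaAtVal → LaAtResult S
  | .success => .success
  | .failure j => .failure j

/-- `f`, converting results of `Memo-(la,at)` to results of `Match-(la,at)`
(undefined on the bare value `Success`). -/
def LaAtResult.toResult? {S : Type} : LaAtResult S → Option Result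
  | .successAt i _ => some (.successAt i)
  | .success => none
  | .failure _ => some .failure

def laAtFinal [DecidableEq S] (q : S) (i : ℕ) : LaAtResult S → LaAtResult S
  | .successAt i' K => .successAt i' (insert (q, i) K)
  | r => r

def laAtRecord [DecidableEq S] (M : S × ℕ → Option LaAtVal) (q : S) (i : ℕ) :
    LaAtResult S → (S × ℕ → Option LaAtVal)
  | .successAt _ _ => M
  | .success => fun p => if p = (q, i) then some LaAtVal.success else M p
  | .failure j => fun p => if p = (q, i) then some (LaAtVal.failure j) else M p

def laAtBatch [DecidableEq S] (M : S × ℕ → Option LaAtVal) (K : Finset (S × ℕ))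
    (v : LaAtVal) : S × ℕ → Option LaAtVal :=
  fun p => if p ∈ K then some v else M p

/-- Big-step semantics (with resulting memoization table and the number of recursive
calls made) of the combined memoized backtracking matching algorithm `Memo-(la,at)`:
`MemoLaAtRun w A0 A q i M M' r n` means the call `Memo-(la,at)^M_{A0,A,w}(q, i)`
terminates with result `r`, final memoization table `M'`, making `n` calls in total.
On a positive look-ahead transition, the sub-automaton becomes the new whole automaton
(so nesting depths of atomic grouping are reset by look-around operators). -/
inductive MemoLaAtRun [DecidableEq S] (w : List Sigma) :
    SubNFA Sigma S → SubNFA Sigma S → S → ℕ →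
    (S × ℕ → Option LaAtVal) → (S × ℕ → Option LaAtVal) → LaAtResult S → ℕ → Prop where
  | memoHit {A0 A : SubNFA Sigma S} {q : S} {i : ℕ} {M : S × ℕ → Option LaAtVal}
      {v : LaAtVal} :
      M (q, i) = some v →
      MemoLaAtRun w A0 A q i M M v.toResult 1
  | accept {A0 A : SubNFA Sigma S} {q : S} {i : ℕ} {M : S × ℕ → Option LaAtVal} :
      M (q, i) = none → q ∈ A.F →
      MemoLaAtRun w A0 A q i M M (.successAt i {(q, i)}) 1
  | eps {A0 A : SubNFA Sigma S} {q q' : S} {i : ℕ} {M M' : S × ℕ → Option LaAtVal}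
      {r : LaAtResult S} {n : ℕ} :
      M (q, i) = none → q ∉ A.F → A.T q = SubTrans.eps q' →
      MemoLaAtRun w A0 A q' i M M' r n →
      MemoLaAtRun w A0 A q i M (laAtRecord M' q i (laAtFinal q i r)) (laAtFinal q i r)
        (n + 1)
  | branchNoBT {A0 A : SubNFA Sigma S} {q q' q'' : S} {i : ℕ}
      {M M' : S × ℕ → Option LaAtVal} {r : LaAtResult S} {n : ℕ} :
      M (q, i) = none → q ∉ A.F → A.T q = SubTrans.branch q' q'' →
      MemoLaAtRun w A0 A q' i M M' r n →
      (∀ j, r = LaAtResult.failure j → j ≠ A0.nu q) →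
      MemoLaAtRun w A0 A q i M (laAtRecord M' q i (laAtFinal q i r)) (laAtFinal q i r)
        (n + 1)
  | branchBTFail {A0 A : SubNFA Sigma S} {q q' q'' : S} {i j' : ℕ}
      {M M1 M2 : S × ℕ → Option LaAtVal} {n1 n2 : ℕ} :
      M (q, i) = none → q ∉ A.F → A.T q = SubTrans.branch q' q'' →
      MemoLaAtRun w A0 A q' i M M1 (.failure (A0.nu q)) n1 →
      MemoLaAtRun w A0 A q'' i M1 M2 (.failure j') n2 →
      MemoLaAtRun w A0 A q i M
        (laAtRecord M2 q i (.failure (min (A0.nu q) j')))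
        (.failure (min (A0.nu q) j')) (n1 + n2 + 1)
  | branchBTOther {A0 A : SubNFA Sigma S} {q q' q'' : S} {i : ℕ}
      {M M1 M2 : S × ℕ → Option LaAtVal} {r : LaAtResult S} {n1 n2 : ℕ} :
      M (q, i) = none → q ∉ A.F → A.T q = SubTrans.branch q' q'' →
      MemoLaAtRun w A0 A q' i M M1 (.failure (A0.nu q)) n1 →
      MemoLaAtRun w A0 A q'' i M1 M2 r n2 →
      (∀ j, r ≠ LaAtResult.failure j) →
      MemoLaAtRun w A0 A q i M (laAtRecord M2 q i (laAtFinal q i r)) (laAtFinal q i r)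
        (n1 + n2 + 1)
  | charSucc {A0 A : SubNFA Sigma S} {q q' : S} {σ : Sigma} {i : ℕ}
      {M M' : S × ℕ → Option LaAtVal} {r : LaAtResult S} {n : ℕ} :
      M (q, i) = none → q ∉ A.F → A.T q = SubTrans.char σ q' →
      w[i]? = some σ →
      MemoLaAtRun w A0 A q' (i + 1) M M' r n →
      MemoLaAtRun w A0 A q i M (laAtRecord M' q i (laAtFinal q i r)) (laAtFinal q i r)
        (n + 1)
  | charFail {A0 A : SubNFA Sigma S} {q q' : S} {σ : Sigma} {i : ℕ}
      {M : S × ℕ → Option LaAtVal} :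
      M (q, i) = none → q ∉ A.F → A.T q = SubTrans.char σ q' →
      w[i]? ≠ some σ →
      MemoLaAtRun w A0 A q i M (laAtRecord M q i (.failure (A0.nu q)))
        (.failure (A0.nu q)) 1
  | plaSuccAt {A0 A A' : SubNFA Sigma S} {q q' : S} {i i' : ℕ} {K' : Finset (S × ℕ)}
      {M M1 M2 : S × ℕ → Option LaAtVal} {r : LaAtResult S} {n1 n2 : ℕ} :
      M (q, i) = none → q ∉ A.F → A.T q = SubTrans.sub Kind.pla A' q' →
      MemoLaAtRun w A' A' A'.q0 i M M1 (.successAt i' K') n1 →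
      MemoLaAtRun w A0 A q' i (laAtBatch M1 K' LaAtVal.success) M2 r n2 →
      MemoLaAtRun w A0 A q i M (laAtRecord M2 q i (laAtFinal q i r)) (laAtFinal q i r)
        (n1 + n2 + 1)
  | plaBare {A0 A A' : SubNFA Sigma S} {q q' : S} {i : ℕ}
      {M M1 M2 : S × ℕ → Option LaAtVal} {r : LaAtResult S} {n1 n2 : ℕ} :
      M (q, i) = none → q ∉ A.F → A.T q = SubTrans.sub Kind.pla A' q' →
      MemoLaAtRun w A' A' A'.q0 i M M1 .success n1 →
      MemoLaAtRun w A0 A q' i M1 M2 r n2 →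
      MemoLaAtRun w A0 A q i M (laAtRecord M2 q i (laAtFinal q i r)) (laAtFinal q i r)
        (n1 + n2 + 1)
  | plaFail {A0 A A' : SubNFA Sigma S} {q q' : S} {i j : ℕ}
      {M M1 : S × ℕ → Option LaAtVal} {n1 : ℕ} :
      M (q, i) = none → q ∉ A.F → A.T q = SubTrans.sub Kind.pla A' q' →
      MemoLaAtRun w A' A' A'.q0 i M M1 (.failure j) n1 →
      MemoLaAtRun w A0 A q i M (laAtRecord M1 q i (.failure (A0.nu q)))
        (.failure (A0.nu q)) (n1 + 1)
  | atSuccSucc {A0 A A' : SubNFA Sigma S} {q q' : S} {i i' i'' : ℕ}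
      {K' K'' : Finset (S × ℕ)} {M M1 M2 : S × ℕ → Option LaAtVal} {n1 n2 : ℕ} :
      M (q, i) = none → q ∉ A.F → A.T q = SubTrans.sub Kind.at A' q' →
      MemoLaAtRun w A0 A' A'.q0 i M M1 (.successAt i' K') n1 →
      MemoLaAtRun w A0 A q' i' M1 M2 (.successAt i'' K'') n2 →
      MemoLaAtRun w A0 A q i M M2
        (laAtFinal q i (.successAt i'' (K' ∪ K''))) (n1 + n2 + 1)
  | atSuccBare {A0 A A' : SubNFA Sigma S} {q q' : S} {i i' : ℕ} {K' : Finset (S × ℕ)}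
      {M M1 M2 : S × ℕ → Option LaAtVal} {n1 n2 : ℕ} :
      M (q, i) = none → q ∉ A.F → A.T q = SubTrans.sub Kind.at A' q' →
      MemoLaAtRun w A0 A' A'.q0 i M M1 (.successAt i' K') n1 →
      MemoLaAtRun w A0 A q' i' M1 M2 .success n2 →
      MemoLaAtRun w A0 A q i M
        (laAtRecord (laAtBatch M2 K' LaAtVal.success) q i .success) .success
        (n1 + n2 + 1)
  | atSuccFail {A0 A A' : SubNFA Sigma S} {q q' : S} {i i' j : ℕ} {K' : Finset (S × ℕ)}
      {M M1 M2 : S × ℕ → Option LaAtVal} {n1 n2 : ℕ} :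
      M (q, i) = none → q ∉ A.F → A.T q = SubTrans.sub Kind.at A' q' →
      MemoLaAtRun w A0 A' A'.q0 i M M1 (.successAt i' K') n1 →
      MemoLaAtRun w A0 A q' i' M1 M2 (.failure j) n2 →
      MemoLaAtRun w A0 A q i M
        (laAtRecord (laAtBatch M2 K' (LaAtVal.failure j)) q i (.failure j))
        (.failure j) (n1 + n2 + 1)
  | atBare {A0 A A' : SubNFA Sigma S} {q q' : S} {i : ℕ}
      {M M1 : S × ℕ → Option LaAtVal} {n1 : ℕ} :
      M (q, i) = none → q ∉ A.F → A.T q = SubTrans.sub Kind.at A' q' →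
      MemoLaAtRun w A0 A' A'.q0 i M M1 .success n1 →
      MemoLaAtRun w A0 A q i M (laAtRecord M1 q i .success) .success (n1 + 1)
  | atFailHigh {A0 A A' : SubNFA Sigma S} {q q' : S} {i j : ℕ}
      {M M1 : S × ℕ → Option LaAtVal} {n1 : ℕ} :
      M (q, i) = none → q ∉ A.F → A.T q = SubTrans.sub Kind.at A' q' →
      MemoLaAtRun w A0 A' A'.q0 i M M1 (.failure j) n1 →
      A0.nu q < j →
      MemoLaAtRun w A0 A q i M (laAtRecord M1 q i (.failure (A0.nu q)))
        (.failure (A0.nu q)) (n1 + 1)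
  | atFailLow {A0 A A' : SubNFA Sigma S} {q q' : S} {i j : ℕ}
      {M M1 : S × ℕ → Option LaAtVal} {n1 : ℕ} :
      M (q, i) = none → q ∉ A.F → A.T q = SubTrans.sub Kind.at A' q' →
      MemoLaAtRun w A0 A' A'.q0 i M M1 (.failure j) n1 →
      j ≤ A0.nu q →
      MemoLaAtRun w A0 A q i M (laAtRecord M1 q i (.failure j)) (.failure j) (n1 + 1)



/-! ## Proof of the lookup bound -/

section Proof

/-- Components of the sub-automaton of a transition. -/
def SubTrans.subComps : SubTrans Sigma S → List (SubNFA Sigma S)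
  | .sub _ A' _ => A'.comps
  | _ => []

theorem SubTrans.subCompsD_fst (t : SubTrans Sigma S) :
    t.subCompsD.map Prod.fst = t.subComps := by
  cases t <;> simp [SubTrans.subCompsD, SubTrans.subComps, SubNFA.comps, Function.comp_def]

theorem SubNFA.comps_mk (Q : List S) (q0 : S) (F : List S) (T : S → SubTrans Sigma S) :
    (SubNFA.mk Q q0 F T).comps =
      .mk Q q0 F T :: Q.flatMap (fun q => (T q).subComps) := by
  simp only [SubNFA.comps, SubNFA.compsD, List.map_cons, List.map_flatMap,
    SubTrans.subCompsD_fst]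

theorem SubNFA.comps_eq (A : SubNFA Sigma S) :
    A.comps = A :: A.Q.flatMap (fun q => (A.T q).subComps) := by
  cases A; exact SubNFA.comps_mk _ _ _ _

theorem SubNFA.self_mem_comps (A : SubNFA Sigma S) : A ∈ A.comps := by
  rw [SubNFA.comps_eq]; simp

/-- Induction principle: to prove `P A`, assume `P` for the sub-automata of transitions. -/
theorem SubNFA.induct {P : SubNFA Sigma S → Prop}
    (h : ∀ A : SubNFA Sigma S, (∀ q k A' q', A.T q = .sub k A' q' → P A') → P A)
    (A : SubNFA Sigma S) : P A := by
  refine SubNFA.rec (motive_1 := P)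
    (motive_2 := fun t => ∀ k A' q', t = .sub k A' q' → P A') ?_ ?_ ?_ ?_ ?_ A
  · intro Q q0 F T ih
    exact h _ (fun q => ih q)
  · intro a k A' q' h; cases h
  · intro a b k A' q' h; cases h
  · intro a b k A' q' h; cases h
  · intro k A q hA k' A' q' h; cases h; exact hA

theorem sublist_flatMap_of_mem {α β : Type} (f : α → List β) {l : List α} {a : α}
    (h : a ∈ l) : (f a).Sublist (l.flatMap f) := by
  induction l with
  | nil => cases h
  | cons b l ih =>
    rw [List.flatMap_cons]
    rcases List.mem_cons.1 h with rfl | h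
    · exact List.sublist_append_left _ _
    · exact (ih h).trans (List.sublist_append_right _ _)

theorem flatMap_sublist {α β : Type} (f : α → List β) {l l' : List α}
    (h : l.Sublist l') : (l.flatMap f).Sublist (l'.flatMap f) := by
  induction h with
  | slnil => simp
  | cons a _ ih => rw [List.flatMap_cons]; exact ih.trans (List.sublist_append_right _ _)
  | cons_cons a _ ih =>
    rw [List.flatMap_cons, List.flatMap_cons]; exact ih.append_left _

theorem SubNFA.sub_comps_sublist {A A' : SubNFA Sigma S} {q q' : S} {k : Kind}
    (hq : q ∈ A.Q) (hT : A.T q = .sub k A' q') :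
    A'.comps.Sublist (A.Q.flatMap (fun q => (A.T q).subComps)) := by
  have := sublist_flatMap_of_mem (fun q => (A.T q).subComps) hq
  simpa [hT, SubTrans.subComps] using this

theorem SubNFA.comps_sublist {A B : SubNFA Sigma S} (hB : B ∈ A.comps) :
    B.comps.Sublist A.comps := by
  induction A using SubNFA.induct with
  | h A ih =>
    have hB' := hB
    rw [SubNFA.comps_eq A] at hB'
    rcases List.mem_cons.1 hB' with rfl | hB'
    · exact List.Sublist.refl _
    · obtain ⟨q, hq, hBq⟩ := List.mem_flatMap.1 hB'
      cases hT : A.T q with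
      | sub k A' q' =>
        rw [hT] at hBq
        have h1 := ih q k A' q' hT hBq
        rw [SubNFA.comps_eq A]
        exact (h1.trans (SubNFA.sub_comps_sublist hq hT)).trans (List.sublist_cons_self _ _)
      | _ => rw [hT] at hBq; simp [SubTrans.subComps] at hBq

theorem SubNFA.sub_mem_comps {A B A' : SubNFA Sigma S} {q q' : S} {k : Kind}
    (hB : B ∈ A.comps) (hq : q ∈ B.Q) (hT : B.T q = .sub k A' q') : A' ∈ A.comps := by
  apply (SubNFA.comps_sublist hB).subset
  rw [SubNFA.comps_eq B]
  exact List.mem_cons_of_mem _ ((SubNFA.sub_comps_sublist hq hT).subset A'.self_mem_comps)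

theorem SubNFA.sub_states {A B A' : SubNFA Sigma S} {q q' x : S} {k : Kind}
    (hN : A.allStates.Nodup)
    (hB : B ∈ A.comps) (hq : q ∈ B.Q) (hT : B.T q = .sub k A' q') (hx : x ∈ A'.allStates) :
    x ∈ B.allStates ∧ x ∉ B.Q := by
  have hNB : B.allStates.Nodup := (flatMap_sublist _ (SubNFA.comps_sublist hB)).nodup hN
  have hsub := flatMap_sublist SubNFA.Q (SubNFA.sub_comps_sublist hq hT)
  have hx' := hsub.subset hx
  unfold SubNFA.allStates at hNB ⊢
  rw [SubNFA.comps_eq B, List.flatMap_cons] at hNB ⊢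
  refine ⟨List.mem_append_right _ hx', fun h => ?_⟩
  exact (List.nodup_append.1 hNB).2.2 x h x hx' rfl

theorem SubNFA.Q_sub_allStates {A : SubNFA Sigma S} {x : S} (h : x ∈ A.Q) :
    x ∈ A.allStates :=
  List.mem_flatMap.2 ⟨A, A.self_mem_comps, h⟩

/-- Whether the sub-automaton of a transition has initial state `q`. -/
def SubTrans.subHit [DecidableEq S] (t : SubTrans Sigma S) (q : S) : ℕ :=
  match t with
  | .sub _ A' _ => if A'.q0 = q then 1 else 0
  | _ => 0

/-- Transitions of non-accepting top-level states. -/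
def SubNFA.nfTrans [DecidableEq S] (B : SubNFA Sigma S) : List (S × SubTrans Sigma S) :=
  (B.Q.filter (fun q => decide (q ∉ B.F))).map fun q => (q, B.T q)

theorem sum_map_filter_le {α : Type} (l : List α) (p : α → Bool) (f : α → ℕ) :
    ((l.filter p).map f).sum ≤ (l.map f).sum := by
  induction l with
  | nil => simp
  | cons a l ih =>
    by_cases h : p a <;> simp [h] <;> omega

theorem sum_map_flatMap' {α β : Type} (l : List α) (g : α → List β) (f : β → ℕ) :
    ((l.flatMap g).map f).sum = (l.map (fun a => ((g a).map f).sum)).sum := by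
  induction l with
  | nil => simp
  | cons a l ih => simp [List.flatMap_cons, ih]

theorem sum_map_le {α : Type} (l : List α) (f g : α → ℕ) (h : ∀ a ∈ l, f a ≤ g a) :
    (l.map f).sum ≤ (l.map g).sum := by
  induction l with
  | nil => simp
  | cons a l ih =>
    have h1 := h a (by simp)
    have h2 := ih (fun b hb => h b (by simp [hb]))
    simp; omega

theorem sum_map_add' {α : Type} (l : List α) (f g : α → ℕ) :
    (l.map (fun a => f a + g a)).sum = (l.map f).sum + (l.map g).sum := by
  induction l with
  | nil => simp
  | cons a l ih => simp [ih]; omega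

theorem le_sum_map_of_mem {α : Type} (l : List α) (f : α → ℕ) {a : α} (h : a ∈ l) :
    f a ≤ (l.map f).sum := by
  induction l with
  | nil => cases h
  | cons b l ih =>
    rcases List.mem_cons.1 h with rfl | h
    · simp
    · have := ih h
      simp; omega

theorem sum_map_swap {α β : Type} (l : List α) (l' : List β) (f : α → β → ℕ) :
    (l.map (fun a => (l'.map (f a)).sum)).sum =
      (l'.map (fun b => (l.map (fun a => f a b)).sum)).sum := by
  induction l with
  | nil => simp
  | cons a l ih => simp [ih]

theorem SubNFA.subHits_le [DecidableEq S] (q : S) (A : SubNFA Sigma S) :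
    (A.comps.map (fun B => (B.nfTrans.map (fun p => p.2.subHit q)).sum)).sum +
      (if A.q0 = q then 1 else 0) ≤
    (A.comps.map (fun B => if B.q0 = q then 1 else 0)).sum := by
  induction A using SubNFA.induct with
  | h A ih =>
    rw [SubNFA.comps_eq A]
    simp only [List.map_cons, List.sum_cons, sum_map_flatMap']
    have h1 : (A.nfTrans.map (fun p => p.2.subHit q)).sum ≤
        (A.Q.map (fun p => (A.T p).subHit q)).sum := by
      unfold SubNFA.nfTrans
      rw [List.map_map]
      exact sum_map_filter_le _ _ _
    have h2 : (A.Q.map (fun p => (A.T p).subHit q +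
          (((A.T p).subComps.map
            (fun B => (B.nfTrans.map (fun p => p.2.subHit q)).sum)).sum))).sum ≤
        (A.Q.map (fun p => ((A.T p).subComps.map
          (fun B => if B.q0 = q then 1 else 0)).sum)).sum := by
      apply sum_map_le
      intro p _
      cases hT : A.T p with
      | sub k A' q' =>
        have := ih p k A' q' hT
        have e : (SubTrans.sub k A' q').subHit q = if A'.q0 = q then 1 else 0 := rfl
        rw [e]
        simp only [SubTrans.subComps]
        omega
      | _ => simp [SubTrans.subComps, SubTrans.subHit]
    rw [sum_map_add'] at h2
    omega

theorem SubNFA.q0_count_le [DecidableEq S] (q : S) (A : SubNFA Sigma S) (hWF : A.WF) :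
    (A.comps.map (fun B => if B.q0 = q then 1 else 0)).sum ≤
      if q ∈ A.comps.map SubNFA.q0 then 1 else 0 := by
  split_ifs with h
  · have h1 : A.allStates.count q ≤ 1 := List.nodup_iff_count_le_one.1 hWF.2 q
    refine le_trans ?_ h1
    unfold SubNFA.allStates
    rw [List.count_flatMap]
    apply sum_map_le
    intro B hB
    split_ifs with hq
    · have := (hWF.1 B hB).1
      rw [hq] at this
      exact List.count_pos_iff.2 this
    · exact Nat.zero_le _
  · have : (A.comps.map (fun B => if B.q0 = q then 1 else 0)).sum ≤
        (A.comps.map (fun _ => 0)).sum := by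
      apply sum_map_le
      intro B hB
      split_ifs with hq
      · exact absurd (List.mem_map.2 ⟨B, hB, hq⟩) h
      · exact le_refl _
    simpa using this

/-! ### Table invariants -/

theorem LaResult.elem_ne_call (r : LaResult) (q : S) (i : ℕ) :
    (r.elem : LaRunElem S) ≠ .call q i := by cases r <;> simp [LaResult.elem]

theorem LaResult.elem_ne_memo (r : LaResult) (q : S) (i : ℕ) :
    (r.elem : LaRunElem S) ≠ .memo q i := by cases r <;> simp [LaResult.elem]

/-- Where the calls made during a run can take place. -/
def ReachOK (A B : SubNFA Sigma S) (p : S) (j : ℕ) (x : S) (k : ℕ) : Prop :=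
  (x ∈ B.Q ∧ (j < k ∨ (k = j ∧ Relation.ReflTransGen A.epsStep p x))) ∨
    (x ∈ B.allStates ∧ x ∉ B.Q)

theorem ReachOK.eps {A B : SubNFA Sigma S} {p p' : S} {j : ℕ} {x : S} {k : ℕ}
    (h : ReachOK A B p' j x k) (hs : A.epsStep p p') : ReachOK A B p j x k := by
  rcases h with ⟨hx, h | ⟨h, h'⟩⟩ | h
  · exact Or.inl ⟨hx, Or.inl h⟩
  · exact Or.inl ⟨hx, Or.inr ⟨h, Relation.ReflTransGen.head hs h'⟩⟩
  · exact Or.inr h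

variable [DecidableEq S]

theorem laRecord_none {M : S × ℕ → Option LaVal} {q : S} {i : ℕ} {r : LaResult}
    {x : S × ℕ} : laRecord M q i r x = none ↔ x ≠ (q, i) ∧ M x = none := by
  unfold laRecord; split_ifs with h <;> simp [h]

theorem memoLa_table {w : List Sigma} {A : SubNFA Sigma S} {p : S} {j : ℕ}
    {M M' : S × ℕ → Option LaVal} {r : LaResult} {s : List (LaRunElem S)}
    (h : MemoLaRun w A p j M M' r s) (x : S) (k : ℕ) :
    (M' (x, k) = none ↔ M (x, k) = none ∧ LaRunElem.call x k ∉ s) ∧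
    (LaRunElem.call x k ∈ s → M (x, k) = none) ∧
    (LaRunElem.memo x k ∈ s → M' (x, k) ≠ none) := by
  have e1 := fun r : LaResult => (LaResult.elem_ne_call r x k).symm
  have e2 := fun r : LaResult => (LaResult.elem_ne_memo r x k).symm
  induction h with
  | memoHit h => simp [e1, e2]; rintro rfl rfl; simp [h]
  | accept h _ => simp [laRecord_none]; grind
  | eps h _ _ _ ih => simp [laRecord_none, e1, e2]; grind
  | branchNoFail h _ _ _ _ ih => simp [laRecord_none, e1, e2]; grind
  | branchFail h _ _ _ _ ih1 ih2 => simp [laRecord_none, e1, e2]; grind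
  | charSucc h _ _ _ _ ih => simp [laRecord_none, e1, e2]; grind
  | charFail h _ _ _ => simp [laRecord_none]; grind
  | plaSucc h _ _ _ _ _ ih1 ih2 => simp [laRecord_none, e1, e2]; grind
  | plaFail h _ _ _ ih => simp [laRecord_none]; grind

theorem memoLa_reach (A0 : SubNFA Sigma S) (hWF : A0.WF)
    {w : List Sigma} {B : SubNFA Sigma S} {p : S} {j : ℕ}
    {M M' : S × ℕ → Option LaVal} {r : LaResult} {s : List (LaRunElem S)}
    (h : MemoLaRun w B p j M M' r s) (x : S) (k : ℕ) (hB : B ∈ A0.comps) (hp : p ∈ B.Q)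
    (hc : LaRunElem.call x k ∈ s) : ReachOK A0 B p j x k := by
  have e1 := fun r : LaResult => (LaResult.elem_ne_call r x k).symm
  have self : ∀ {B : SubNFA Sigma S} {p : S} {j : ℕ}, p ∈ B.Q → ReachOK A0 B p j p j :=
    fun hp => Or.inl ⟨hp, Or.inr ⟨rfl, Relation.ReflTransGen.refl⟩⟩
  have sub : ∀ {B A' : SubNFA Sigma S} {p q' : S} {j : ℕ} {kd : Kind}, B ∈ A0.comps → p ∈ B.Q →
      B.T p = .sub kd A' q' → ReachOK A0 A' A'.q0 j x k → ReachOK A0 B p j x k := by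
    intro B A' p q' j kd hB hp hT h
    refine Or.inr (SubNFA.sub_states hWF.2 hB hp hT ?_)
    rcases h with ⟨h, _⟩ | ⟨h, _⟩
    · exact SubNFA.Q_sub_allStates h
    · exact h
  induction h with
  | memoHit h => simp [e1] at hc
  | accept h _ =>
    simp at hc; obtain ⟨rfl, rfl⟩ := hc; exact self hp
  | @eps A q q' i _ _ _ _ h hF hT _ ih =>
    have hL := (hWF.1 _ hB).2.2 _ hp hF
    simp only [hT] at hL
    simp [e1] at hc
    rcases hc with ⟨rfl, rfl⟩ | hc
    · exact self hp
    · exact (ih hB hL hc).eps ⟨A, hB, hp, hF, Or.inl hT⟩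
  | @branchNoFail A q q' q'' i _ _ _ _ h hF hT _ _ ih =>
    have hL := (hWF.1 _ hB).2.2 _ hp hF
    simp only [hT] at hL
    simp [e1] at hc
    rcases hc with ⟨rfl, rfl⟩ | hc
    · exact self hp
    · exact (ih hB hL.1 hc).eps ⟨A, hB, hp, hF, Or.inr (Or.inl ⟨_, hT⟩)⟩
  | @branchFail A q q' q'' i _ _ _ _ _ _ h hF hT _ _ ih1 ih2 =>
    have hL := (hWF.1 _ hB).2.2 _ hp hF
    simp only [hT] at hL
    simp [e1] at hc
    rcases hc with ⟨rfl, rfl⟩ | hc | hc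
    · exact self hp
    · exact (ih1 hB hL.1 hc).eps ⟨A, hB, hp, hF, Or.inr (Or.inl ⟨_, hT⟩)⟩
    · exact (ih2 hB hL.2 hc).eps ⟨A, hB, hp, hF, Or.inr (Or.inr (Or.inl ⟨_, hT⟩))⟩
  | @charSucc A q q' σ i _ _ _ _ h hF hT _ _ ih =>
    have hL := (hWF.1 _ hB).2.2 _ hp hF
    simp only [hT] at hL
    simp [e1] at hc
    rcases hc with ⟨rfl, rfl⟩ | hc
    · exact self hp
    · rcases ih hB hL hc with ⟨hx, h⟩ | h
      · exact Or.inl ⟨hx, Or.inl (by omega)⟩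
      · exact Or.inr h
  | charFail h _ _ _ =>
    simp at hc; obtain ⟨rfl, rfl⟩ := hc; exact self hp
  | @plaSucc A A' q q' i _ _ _ _ _ _ _ h hF hT _ _ _ ih1 ih2 =>
    have hL := (hWF.1 _ hB).2.2 _ hp hF
    simp only [hT] at hL
    simp [e1] at hc
    have hA' := SubNFA.sub_mem_comps hB hp hT
    rcases hc with ⟨rfl, rfl⟩ | hc | hc
    · exact self hp
    · exact sub hB hp hT (ih1 hA' (hWF.1 _ hA').1 hc)
    · exact (ih2 hB hL hc).eps
        ⟨A, hB, hp, hF, Or.inr (Or.inr (Or.inr ⟨_, _, hT, by simp⟩))⟩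
  | @plaFail A A' q q' i _ _ _ h hF hT _ ih =>
    simp at hc
    have hA' := SubNFA.sub_mem_comps hB hp hT
    rcases hc with ⟨rfl, rfl⟩ | hc
    · exact self hp
    · exact sub hB hp hT (ih hA' (hWF.1 _ hA').1 hc)

theorem memoLa_call_count (A0 : SubNFA Sigma S) (hWF : A0.WF) (hLoop : A0.NoEpsLoops)
    {w : List Sigma} {B : SubNFA Sigma S} {p : S} {j : ℕ}
    {M M' : S × ℕ → Option LaVal} {r : LaResult} {s : List (LaRunElem S)}
    (h : MemoLaRun w B p j M M' r s) (x : S) (k : ℕ) (hB : B ∈ A0.comps) (hp : p ∈ B.Q) :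
    s.count (LaRunElem.call x k) ≤ 1 := by
  have e1 : ∀ r : LaResult, List.count (LaRunElem.call x k) [(r.elem : LaRunElem S)] = 0 :=
    fun r => by
      rw [List.count_eq_zero]; simp [(LaResult.elem_ne_call r x k).symm]
  -- a run of a successor state in the same automaton does not call the source again
  have step : ∀ {B : SubNFA Sigma S} {p p' : S} {j : ℕ} {M M' : S × ℕ → Option LaVal}
      {r : LaResult} {s : List (LaRunElem S)}, B ∈ A0.comps → p ∈ B.Q → p' ∈ B.Q →
      A0.epsStep p p' → MemoLaRun w B p' j M M' r s → LaRunElem.call p j ∉ s := by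
    intro B p p' j M M' r s hB hp hp' hs h hc
    rcases memoLa_reach A0 hWF h p j hB hp' hc with ⟨_, h | ⟨_, h⟩⟩ | ⟨_, h⟩
    · omega
    · exact hLoop p (Relation.TransGen.head' hs h)
    · exact h hp
  have stepSub : ∀ {B A' : SubNFA Sigma S} {p q' : S} {j : ℕ} {kd : Kind}
      {M M' : S × ℕ → Option LaVal}
      {r : LaResult} {s : List (LaRunElem S)}, B ∈ A0.comps → p ∈ B.Q →
      B.T p = .sub kd A' q' → MemoLaRun w A' A'.q0 j M M' r s →
      LaRunElem.call p j ∉ s := by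
    intro B A' p q' j kd M M' r s hB hp hT h hc
    have hA' := SubNFA.sub_mem_comps hB hp hT
    refine (SubNFA.sub_states hWF.2 hB hp hT (x := p) ?_).2 hp
    rcases memoLa_reach A0 hWF h p j hA' (hWF.1 _ hA').1 hc with ⟨h, _⟩ | ⟨h, _⟩
    · exact SubNFA.Q_sub_allStates h
    · exact h
  have one : ∀ {q : S} {i : ℕ} {s : List (LaRunElem S)},
      LaRunElem.call q i ∉ s → s.count (LaRunElem.call x k) ≤ 1 →
      (LaRunElem.call q i :: s).count (LaRunElem.call x k) ≤ 1 := by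
    intro q i s hn h
    by_cases hx : (LaRunElem.call q i : LaRunElem S) = .call x k
    · rw [hx] at hn
      rw [hx, List.count_cons_self, List.count_eq_zero.2 hn]
    · rw [List.count_cons_of_ne hx]; exact h
  have two : ∀ {B1 B2 : SubNFA Sigma S} {p1 p2 : S} {j : ℕ} {M M1 M2 : S × ℕ → Option LaVal}
      {r1 r2 : LaResult} {s1 s2 : List (LaRunElem S)},
      MemoLaRun w B1 p1 j M M1 r1 s1 → MemoLaRun w B2 p2 j M1 M2 r2 s2 →
      s1.count (LaRunElem.call x k) ≤ 1 → s2.count (LaRunElem.call x k) ≤ 1 →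
      (s1 ++ s2).count (LaRunElem.call x k) ≤ 1 := by
    intro B1 B2 p1 p2 j M M1 M2 r1 r2 s1 s2 h1 h2 c1 c2
    rw [List.count_append]
    by_cases hx : LaRunElem.call x k ∈ s1
    · have : LaRunElem.call x k ∉ s2 := fun h' =>
        ((memoLa_table h1 x k).1.1 ((memoLa_table h2 x k).2.1 h')).2 hx
      rw [List.count_eq_zero.2 this]; exact c1
    · rw [List.count_eq_zero.2 hx]; omega
  induction h with
  | @memoHit A q i M v h => 
    have := e1 v.toResult
    rw [List.count_cons_of_ne (by simp)]; omega
  | @accept A q i M h _ => exact one (by simp) (by simp)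
  | @eps A q q' i _ _ _ _ h hF hT hr ih =>
    have hL := (hWF.1 _ hB).2.2 _ hp hF
    simp only [hT] at hL
    rw [List.count_append, e1]
    exact one (step hB hp hL ⟨A, hB, hp, hF, Or.inl hT⟩ hr) (ih hB hL)
  | @branchNoFail A q q' q'' i _ _ _ _ h hF hT hr _ ih =>
    have hL := (hWF.1 _ hB).2.2 _ hp hF
    simp only [hT] at hL
    rw [List.count_append, e1]
    exact one (step hB hp hL.1 ⟨A, hB, hp, hF, Or.inr (Or.inl ⟨_, hT⟩)⟩ hr) (ih hB hL.1)
  | @branchFail A q q' q'' i _ _ _ _ _ _ h hF hT hr1 hr2 ih1 ih2 =>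
    have hL := (hWF.1 _ hB).2.2 _ hp hF
    simp only [hT] at hL
    rw [List.count_append, e1, List.cons_append]
    refine one ?_ (two hr1 hr2 (ih1 hB hL.1) (ih2 hB hL.2))
    rw [List.mem_append, not_or]
    exact ⟨step hB hp hL.1 ⟨A, hB, hp, hF, Or.inr (Or.inl ⟨_, hT⟩)⟩ hr1,
      step hB hp hL.2 ⟨A, hB, hp, hF, Or.inr (Or.inr (Or.inl ⟨_, hT⟩))⟩ hr2⟩
  | @charSucc A q q' σ i _ _ _ _ h hF hT _ hr ih =>
    have hL := (hWF.1 _ hB).2.2 _ hp hF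
    simp only [hT] at hL
    rw [List.count_append, e1]
    refine one ?_ (ih hB hL)
    intro hc
    rcases memoLa_reach A0 hWF hr _ _ hB hL hc with ⟨_, h | ⟨h, _⟩⟩ | ⟨_, h⟩
    · omega
    · omega
    · exact h hp
  | charFail h _ _ _ => exact one (by simp) (by simp)
  | @plaSucc A A' q q' i _ _ _ _ _ _ _ h hF hT hr1 _ hr2 ih1 ih2 =>
    have hL := (hWF.1 _ hB).2.2 _ hp hF
    simp only [hT] at hL
    have hA' := SubNFA.sub_mem_comps hB hp hT
    rw [List.count_append, e1, List.cons_append]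
    refine one ?_ (two hr1 hr2 (ih1 hA' (hWF.1 _ hA').1) (ih2 hB hL))
    rw [List.mem_append, not_or]
    exact ⟨stepSub hB hp hT hr1,
      step hB hp hL ⟨A, hB, hp, hF, Or.inr (Or.inr (Or.inr ⟨_, _, hT, by simp⟩))⟩ hr2⟩
  | @plaFail A A' q q' i _ _ _ h hF hT hr ih =>
    have hA' := SubNFA.sub_mem_comps hB hp hT
    rw [List.count_append]
    exact one (stepSub hB hp hT hr) (ih hA' (hWF.1 _ hA').1)

/-! ### Accounting of calls by transitions -/

/-- The source position of a call at position `i` along a transition. -/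
def SubTrans.srcPos (t : SubTrans Sigma S) (i : ℕ) : ℕ :=
  match t with
  | .char _ _ => i - 1
  | _ => i

/-- How many calls of `(q, i)` a run element may directly cause. -/
def callWt (A : SubNFA Sigma S) (q : S) (i : ℕ) (e : LaRunElem S) : ℕ :=
  (A.allTransNF.map (fun x =>
    if e = .call x.1 (x.2.srcPos i) then x.2.hits q + x.2.subHit q else 0)).sum

/-- The number of calls (memoized or not) of `(q, i)` in a run. -/
def cnt (q : S) (i : ℕ) (s : List (LaRunElem S)) : ℕ :=
  s.count (LaRunElem.call q i) + s.count (LaRunElem.memo q i)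

/-- `1` if the two calls agree. -/
def same (q : S) (i : ℕ) (p : S) (j : ℕ) : ℕ := if p = q ∧ j = i then 1 else 0

theorem callWt_ge {A B : SubNFA Sigma S} {p : S} (q : S) (i : ℕ) {j : ℕ} (hB : B ∈ A.comps)
    (hp : p ∈ B.Q) (hF : p ∉ B.F) (hj : j = (B.T p).srcPos i) :
    (B.T p).hits q + (B.T p).subHit q ≤ callWt A q i (.call p j) := by
  have hm : (p, B.T p) ∈ A.allTransNF := by
    refine List.mem_flatMap.2 ⟨B, hB, List.mem_map.2 ⟨p, ?_, rfl⟩⟩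
    simp [hp, hF]
  have := le_sum_map_of_mem A.allTransNF (fun x =>
    if (LaRunElem.call p j : LaRunElem S) = .call x.1 (x.2.srcPos i)
      then x.2.hits q + x.2.subHit q else 0) hm
  simpa [hj, callWt] using this

theorem cnt_append (q : S) (i : ℕ) (s t : List (LaRunElem S)) :
    cnt q i (s ++ t) = cnt q i s + cnt q i t := by
  simp [cnt]; omega

theorem cnt_cons_call (q : S) (i : ℕ) (p : S) (j : ℕ) (s : List (LaRunElem S)) :
    cnt q i (.call p j :: s) = same q i p j + cnt q i s := by
  simp [cnt, same, List.count_cons]; omega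

theorem cnt_elem (q : S) (i : ℕ) (r : LaResult) :
    cnt q i [(r.elem : LaRunElem S)] = 0 := by
  cases r <;> simp [cnt, LaResult.elem]

theorem memoLa_accounting (A0 : SubNFA Sigma S) (hWF : A0.WF) (q : S) (i : ℕ)
    {w : List Sigma} {B : SubNFA Sigma S} {p : S} {j : ℕ}
    {M M' : S × ℕ → Option LaVal} {r : LaResult} {s : List (LaRunElem S)}
    (h : MemoLaRun w B p j M M' r s) (hB : B ∈ A0.comps) (hp : p ∈ B.Q) :
    cnt q i s ≤ same q i p j + (s.map (callWt A0 q i)).sum := by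
  induction h with
  | @memoHit A p j M v h =>
    have h1 := cnt_elem q i v.toResult
    have : cnt q i [LaRunElem.memo p j, v.toResult.elem] = same q i p j := by
      rw [← List.singleton_append, cnt_append, h1]
      simp [cnt, same, List.count_cons]
    omega
  | @accept A p j M h _ =>
    rw [cnt_cons_call, show LaRunElem.succAt j = (LaResult.successAt j).elem from rfl, cnt_elem]
    omega
  | @eps A p p' j _ _ r _ h hF hT hr ih =>
    have hL := (hWF.1 _ hB).2.2 _ hp hF
    simp only [hT] at hL
    have ih := ih hB hL
    have hk : same q i p' j ≤ callWt A0 q i (.call p j) := by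
      unfold same; split_ifs with hc
      · have := callWt_ge q i (j := j) hB hp hF (by rw [hT]; exact hc.2)
        simp [hT, SubTrans.hits, hc.1] at this; omega
      · omega
    rw [cnt_append, cnt_cons_call, cnt_elem]
    simp only [List.map_append, List.map_cons, List.sum_append, List.sum_cons]
    omega
  | @branchNoFail A p p' p'' j _ _ r _ h hF hT hr _ ih =>
    have hL := (hWF.1 _ hB).2.2 _ hp hF
    simp only [hT] at hL
    have ih := ih hB hL.1
    have hk : same q i p' j ≤ callWt A0 q i (.call p j) := by
      unfold same; split_ifs with hc
      · have := callWt_ge q i (j := j) hB hp hF (by rw [hT]; exact hc.2)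
        simp [hT, SubTrans.hits, hc.1] at this; omega
      · omega
    rw [cnt_append, cnt_cons_call, cnt_elem]
    simp only [List.map_append, List.map_cons, List.sum_append, List.sum_cons]
    omega
  | @branchFail A p p' p'' j _ _ _ r _ _ h hF hT hr1 hr2 ih1 ih2 =>
    have hL := (hWF.1 _ hB).2.2 _ hp hF
    simp only [hT] at hL
    have ih1 := ih1 hB hL.1
    have ih2 := ih2 hB hL.2
    have hk : same q i p' j + same q i p'' j ≤ callWt A0 q i (.call p j) := by
      by_cases hj : j = i
      · have := callWt_ge q i (j := j) hB hp hF (by rw [hT]; exact hj)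
        simp only [hT, SubTrans.hits] at this
        simp only [same, hj, and_true] at this ⊢
        omega
      · simp [same, hj]
    rw [cnt_append, List.cons_append, cnt_cons_call, cnt_append, cnt_elem]
    simp only [List.map_append, List.map_cons, List.sum_append, List.sum_cons]
    omega
  | @charSucc A p p' σ j _ _ r _ h hF hT _ hr ih =>
    have hL := (hWF.1 _ hB).2.2 _ hp hF
    simp only [hT] at hL
    have ih := ih hB hL
    have hk : same q i p' (j + 1) ≤ callWt A0 q i (.call p j) := by
      unfold same; split_ifs with hc
      · have := callWt_ge q i (j := j) hB hp hF (by
          rw [hT]; simp only [SubTrans.srcPos]; omega)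
        simp [hT, SubTrans.hits, hc.1] at this; omega
      · omega
    rw [cnt_append, cnt_cons_call, cnt_elem]
    simp only [List.map_append, List.map_cons, List.sum_append, List.sum_cons]
    omega
  | @charFail A p p' σ j M h _ _ _ =>
    rw [cnt_cons_call, show LaRunElem.fail = (LaResult.failure).elem from rfl, cnt_elem]
    omega
  | @plaSucc A A' p p' j _ _ _ _ r _ _ h hF hT hr1 _ hr2 ih1 ih2 =>
    have hL := (hWF.1 _ hB).2.2 _ hp hF
    simp only [hT] at hL
    have hA' := SubNFA.sub_mem_comps hB hp hT
    have ih1 := ih1 hA' (hWF.1 _ hA').1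
    have ih2 := ih2 hB hL
    have hk : same q i A'.q0 j + same q i p' j ≤ callWt A0 q i (.call p j) := by
      by_cases hj : j = i
      · have := callWt_ge q i (j := j) hB hp hF (by rw [hT]; exact hj)
        simp only [hT, SubTrans.hits, SubTrans.subHit] at this
        simp only [same, hj, and_true] at this ⊢
        omega
      · simp [same, hj]
    rw [cnt_append, List.cons_append, cnt_cons_call, cnt_append, cnt_elem]
    simp only [List.map_append, List.map_cons, List.sum_append, List.sum_cons]
    omega
  | @plaFail A A' p p' j _ _ _ h hF hT hr ih =>
    have hA' := SubNFA.sub_mem_comps hB hp hT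
    have ih := ih hA' (hWF.1 _ hA').1
    have hk : same q i A'.q0 j ≤ callWt A0 q i (.call p j) := by
      by_cases hj : j = i
      · have := callWt_ge q i (j := j) hB hp hF (by rw [hT]; exact hj)
        simp only [hT, SubTrans.hits, SubTrans.subHit] at this
        simp only [same, hj, and_true] at this ⊢
        omega
      · simp [same, hj]
    rw [cnt_append, cnt_cons_call, show LaRunElem.fail = (LaResult.failure).elem from rfl,
      cnt_elem]
    simp only [List.map_append, List.map_cons, List.sum_append, List.sum_cons]
    omega

theorem sum_map_ite_eq (s : List (LaRunElem S)) (a : LaRunElem S) (n : ℕ) :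
    (s.map (fun e => if e = a then n else 0)).sum = s.count a * n := by
  induction s with
  | nil => simp
  | cons b s ih =>
    by_cases h : b = a
    · simp [h, ih, Nat.add_mul]; omega
    · simp [h, ih]

theorem callWt_sum_le (A : SubNFA Sigma S) (q : S) (i : ℕ) (s : List (LaRunElem S))
    (h : ∀ x k, s.count (LaRunElem.call x k) ≤ 1) :
    (s.map (callWt A q i)).sum ≤
      (A.allTransNF.map (fun p => p.2.hits q)).sum +
      (A.comps.map (fun B => (B.nfTrans.map (fun p => p.2.subHit q)).sum)).sum := by
  have h1 : (A.comps.map (fun B => (B.nfTrans.map (fun p => p.2.subHit q)).sum)).sum =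
      (A.allTransNF.map (fun p => p.2.subHit q)).sum := by
    unfold SubNFA.allTransNF
    rw [sum_map_flatMap']
    rfl
  rw [h1, ← sum_map_add']
  unfold callWt
  rw [sum_map_swap]
  apply sum_map_le
  intro x _
  rw [sum_map_ite_eq]
  have := h x.1 (x.2.srcPos i)
  calc _ ≤ 1 * _ := Nat.mul_le_mul_right _ this
    _ = _ := Nat.one_mul _

end Proof

/-- **Lemma 9** (memoization-table lookups are bounded by in-degree for `Memo-la`):
for every run `s` of an execution of `Memo-la`, every state `q ∈ P`, and every position
`i ∈ {0, …, |w|}`, the element `M(q, i)` appears at most `#in(q) − 1` times in `s`. -/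
theorem memoLa_lookup_bound {Sigma S : Type} [DecidableEq S]
    (A : SubNFA Sigma S) (hWF : A.WF) (hLa : A.IsLaNFA) (hLoop : A.NoEpsLoops)
    (w : List Sigma) (i0 : ℕ) (hi0 : i0 ≤ w.length)
    {M' : S × ℕ → Option LaVal} {r : LaResult} {s : List (LaRunElem S)}
    (hrun : MemoLaRun w A A.q0 i0 (fun _ => none) M' r s)
    (q : S) (hq : q ∈ A.allStates) (i : ℕ) (hi : i ≤ w.length) :
    s.count (LaRunElem.memo q i) ≤ A.inDeg q - 1 := by
  have hA := A.self_mem_comps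
  have hq0 := (hWF.1 A hA).1
  have h1 := memoLa_accounting A hWF q i hrun hA hq0
  have h2 := callWt_sum_le A q i s
    (fun x k => memoLa_call_count A hWF hLoop hrun x k hA hq0)
  have h3 := SubNFA.subHits_le q A
  have h4 := SubNFA.q0_count_le q A hWF
  have h5 : same q i A.q0 i0 ≤ if A.q0 = q then 1 else 0 := by
    unfold same; split_ifs <;> simp_all
  have h6 : cnt q i s ≤ A.inDeg q := by
    unfold SubNFA.inDeg; omega
  by_cases hm : LaRunElem.memo q i ∈ s
  · have ht := memoLa_table hrun q i
    have hc : LaRunElem.call q i ∈ s := by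
      by_contra hc
      exact ht.2.2 hm (ht.1.2 ⟨rfl, hc⟩)
    have := List.count_pos_iff.2 hc
    unfold cnt at h6
    omega
  · rw [List.count_eq_zero.2 hm]; exact Nat.zero_le _

end RegexMemo
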